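/- arXiv:2506.02385 — 2 statements merged into one kernel-verified Lean document; each statement's English description precedes it below -/
import Mathlib

section
/- Let α and β be finite types, P a transition matrix over α × β, and γ ∈ (0,1). Then P is separable if and only if the transition matrix (1 − γ)(I − γP)^{-1} is separable. -/
open Matrix

/-- A transition matrix: nonnegative entries, each row sums to 1. -/
def IsTransition {ι : Type*} [Fintype ι] (P : Matrix ι ι ℝ) : Prop :=
  (∀ i j, 0 ≤ P i j) ∧ ∀ i, ∑ j, P i j = 1

/-- Kronecker product of a matrix over `α` and a matrix over `β`. -/
def kron {α β : Type*} (A : Matrix α α ℝ) (B : Matrix β β ℝ) :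
    Matrix (α × β) (α × β) ℝ :=
  Matrix.of fun p q => A p.1 q.1 * B p.2 q.2

/-- A matrix over `α × β` is separable if it is a linear combination (coefficients summing
to 1) of Kronecker products of transition matrices. -/
def Separable {α β : Type*} [Fintype α] [Fintype β]
    (Q : Matrix (α × β) (α × β) ℝ) : Prop :=
  ∃ (K : ℕ) (x : Fin K → ℝ) (A : Fin K → Matrix α α ℝ) (B : Fin K → Matrix β β ℝ),
    (∑ j, x j = 1) ∧ (∀ j, IsTransition (A j)) ∧ (∀ j, IsTransition (B j)) ∧
    Q = ∑ j, x j • kron (A j) (B j)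

/-!
The span of the Kronecker products of transition matrices is a subalgebra, since these products
form a monoid. Every transition matrix fixes the all-ones vector, so a combination of them has
coefficients summing to `1` exactly when it fixes that vector too: separable means lying in the
subalgebra and fixing the all-ones vector. Both conditions pass between `P` and
`(1 - γ)(1 - γP)⁻¹`, because by Cayley–Hamilton a subalgebra of matrices is closed under inverses.
-/

section Subalgebra

open Polynomial

variable {R n : Type*} [CommRing R] [Fintype n] [DecidableEq n]

theorem mul_aeval_divX_charpoly (M : Matrix n n R) :
    M * aeval M M.charpoly.divX = -algebraMap R (Matrix n n R) (M.charpoly.coeff 0) := by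
  have hcayley : aeval M (X * M.charpoly.divX + C (M.charpoly.coeff 0)) = 0 := by
    rw [X_mul_divX_add, aeval_self_charpoly]
  rw [map_add, map_mul, aeval_X, aeval_C] at hcayley
  exact eq_neg_of_add_eq_zero_left hcayley

theorem isUnit_charpoly_coeff_zero {M : Matrix n n R} (hunit : IsUnit M) :
    IsUnit (M.charpoly.coeff 0) := by
  have hdet : IsUnit M.det := M.isUnit_iff_isUnit_det.1 hunit
  rw [det_eq_sign_charpoly_coeff] at hdet
  exact isUnit_of_mul_isUnit_right hdet

theorem nonsing_inv_mem_subalgebra (S : Subalgebra R (Matrix n n R)) {M : Matrix n n R}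
    (hM : M ∈ S) (hunit : IsUnit M) : M⁻¹ ∈ S := by
  obtain ⟨c, hc⟩ := isUnit_charpoly_coeff_zero hunit
  have hinv : M * (-(↑c⁻¹ : R) • aeval M M.charpoly.divX) = 1 := by
    rw [mul_smul_comm, mul_aeval_divX_charpoly, ← hc, neg_smul_neg,
      Algebra.algebraMap_eq_smul_one, smul_smul, c.inv_mul, one_smul]
  rw [inv_eq_right_inv hinv]
  exact S.smul_mem (Algebra.adjoin_singleton_le hM (aeval_mem_adjoin_singleton R M)) _

theorem nonsing_inv_mem_subalgebra_iff (S : Subalgebra R (Matrix n n R)) {M : Matrix n n R}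
    (hunit : IsUnit M) : M⁻¹ ∈ S ↔ M ∈ S := by
  refine ⟨fun hM => ?_, fun hM => nonsing_inv_mem_subalgebra S hM hunit⟩
  rw [← M.nonsing_inv_nonsing_inv (M.isUnit_iff_isUnit_det.1 hunit)]
  exact nonsing_inv_mem_subalgebra S hM (M.isUnit_nonsing_inv_iff.2 hunit)

end Subalgebra

section Resolvent

variable {F n : Type*} [Field F] [Fintype n] [DecidableEq n] {M : Matrix n n F} {γ : F}

theorem smul_inv_one_sub_smul_mem_subalgebra_iff (S : Subalgebra F (Matrix n n F))
    (hγ0 : γ ≠ 0) (hγ1 : γ ≠ 1) (hunit : IsUnit (1 - γ • M)) :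
    (1 - γ) • (1 - γ • M)⁻¹ ∈ S ↔ M ∈ S :=
  calc (1 - γ) • (1 - γ • M)⁻¹ ∈ S
    _ ↔ (1 - γ • M)⁻¹ ∈ S := S.toSubmodule.smul_mem_iff (sub_ne_zero.2 hγ1.symm)
    _ ↔ 1 - γ • M ∈ S := nonsing_inv_mem_subalgebra_iff S hunit
    _ ↔ γ • M ∈ S := by rw [sub_eq_add_neg, add_mem_cancel_left (one_mem S), neg_mem_iff]
    _ ↔ M ∈ S := S.toSubmodule.smul_mem_iff hγ0

theorem smul_inv_one_sub_smul_mulVec_eq_self_iff (hγ0 : γ ≠ 0) (hunit : IsUnit (1 - γ • M))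
    (v : n → F) : ((1 - γ) • (1 - γ • M)⁻¹) *ᵥ v = v ↔ M *ᵥ v = v :=
  calc ((1 - γ) • (1 - γ • M)⁻¹) *ᵥ v = v
    _ ↔ (1 - γ • M)⁻¹ *ᵥ ((1 - γ) • v) = v := by rw [smul_mulVec, mulVec_smul]
    _ ↔ (1 - γ) • v = (1 - γ • M) *ᵥ v := by
      rw [← (mulVec_injective_of_isUnit hunit).eq_iff, mulVec_mulVec,
        mul_nonsing_inv _ ((isUnit_iff_isUnit_det _).1 hunit), one_mulVec]
    _ ↔ γ • v = γ • (M *ᵥ v) := by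
      rw [sub_smul, one_smul, sub_mulVec, one_mulVec, smul_mulVec, sub_right_inj]
    _ ↔ M *ᵥ v = v := by rw [smul_right_inj hγ0, eq_comm]

end Resolvent

theorem sum_smul_mulVec_of_mulVec_eq_self {R n κ : Type*} [CommSemiring R] [Fintype n]
    [Fintype κ] (x : κ → R) {M : κ → Matrix n n R} {v : n → R} (hM : ∀ j, M j *ᵥ v = v) :
    (∑ j, x j • M j) *ᵥ v = (∑ j, x j) • v := by
  simp only [sum_mulVec, smul_mulVec, hM, Finset.sum_smul]

section Transition

variable {ι : Type*} [Fintype ι]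

theorem IsTransition.mulVec_one {P : Matrix ι ι ℝ} (hP : IsTransition P) : P *ᵥ 1 = 1 := by
  ext i
  simp [mulVec, dotProduct, hP.2 i]

open scoped Matrix.Norms.Operator in
theorem IsTransition.linfty_opNorm_le_one {P : Matrix ι ι ℝ} (hP : IsTransition P) : ‖P‖ ≤ 1 := by
  rw [linfty_opNorm_def]
  norm_cast
  refine Finset.sup_le fun i _ => ?_
  rw [← NNReal.coe_le_coe]
  simp [abs_of_nonneg, hP.1, hP.2]

variable [DecidableEq ι]

open scoped Matrix.Norms.Operator in
theorem IsTransition.isUnit_one_sub_smul {P : Matrix ι ι ℝ} (hP : IsTransition P) {γ : ℝ}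
    (hγ : |γ| < 1) : IsUnit (1 - γ • P) := by
  refine isUnit_one_sub_of_norm_lt_one ?_
  calc ‖γ • P‖ = |γ| * ‖P‖ := norm_smul γ P
    _ ≤ |γ| := mul_le_of_le_one_right (abs_nonneg γ) hP.linfty_opNorm_le_one
    _ < 1 := hγ

theorem isTransition_iff_mem_rowStochastic {P : Matrix ι ι ℝ} :
    IsTransition P ↔ P ∈ rowStochastic ℝ ι :=
  mem_rowStochastic_iff_sum.symm

theorem IsTransition.one : IsTransition (1 : Matrix ι ι ℝ) :=
  isTransition_iff_mem_rowStochastic.2 (one_mem _)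

end Transition

section Kron

theorem kron_one_one {α β : Type*} [DecidableEq α] [DecidableEq β] :
    kron (1 : Matrix α α ℝ) (1 : Matrix β β ℝ) = 1 :=
  one_kronecker_one

variable {α β : Type*} [Fintype α] [Fintype β]

theorem IsTransition.kron {A : Matrix α α ℝ} {B : Matrix β β ℝ} (hA : IsTransition A)
    (hB : IsTransition B) : IsTransition (kron A B) := by
  refine ⟨fun p q => mul_nonneg (hA.1 _ _) (hB.1 _ _), fun p => ?_⟩
  simp [_root_.kron, Fintype.sum_prod_type, ← Finset.mul_sum, hA.2, hB.2]

theorem kron_mul_kron (A C : Matrix α α ℝ) (B D : Matrix β β ℝ) :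
    kron A B * kron C D = kron (A * C) (B * D) :=
  (mul_kronecker_mul A C B D).symm

variable [DecidableEq α] [DecidableEq β]

variable (α β) in
/-- The Kronecker product as a monoid homomorphism on pairs of matrices, used to build
`kronSubmonoid` as an image. -/
def kronHom : Matrix α α ℝ × Matrix β β ℝ →* Matrix (α × β) (α × β) ℝ where
  toFun M := kron M.1 M.2
  map_one' := kron_one_one
  map_mul' M N := (kron_mul_kron M.1 N.1 M.2 N.2).symm

@[simp]
theorem kronHom_apply (M : Matrix α α ℝ × Matrix β β ℝ) : kronHom α β M = kron M.1 M.2 :=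
  rfl

variable (α β) in
/-- The monoid of Kronecker products of transition matrices, obtained as the image of pairs of
Mathlib's row-stochastic matrices under `kronHom`. -/
def kronSubmonoid : Submonoid (Matrix (α × β) (α × β) ℝ) :=
  ((rowStochastic ℝ α).prod (rowStochastic ℝ β)).map (kronHom α β)

theorem mem_kronSubmonoid {Q : Matrix (α × β) (α × β) ℝ} :
    Q ∈ kronSubmonoid α β ↔ ∃ A B, IsTransition A ∧ IsTransition B ∧ kron A B = Q := by
  simp [kronSubmonoid, Submonoid.mem_prod, isTransition_iff_mem_rowStochastic, and_assoc]

variable (α β) in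
/-- The algebra spanned by the Kronecker products of transition matrices; separable matrices are
its elements with row sums `1`. Encoded as the
generated algebra, which equals the span because the generators form a monoid. -/
def kronSubalgebra : Subalgebra ℝ (Matrix (α × β) (α × β) ℝ) :=
  Algebra.adjoin ℝ (kronSubmonoid α β)

theorem mem_kronSubalgebra {Q : Matrix (α × β) (α × β) ℝ} :
    Q ∈ kronSubalgebra α β ↔
      ∃ (K : ℕ) (x : Fin K → ℝ) (A : Fin K → Matrix α α ℝ) (B : Fin K → Matrix β β ℝ),
        (∀ j, IsTransition (A j)) ∧ (∀ j, IsTransition (B j)) ∧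
          Q = ∑ j, x j • kron (A j) (B j) := by
  have hspan : Q ∈ kronSubalgebra α β ↔
      Q ∈ Submodule.span ℝ (kronSubmonoid α β : Set (Matrix (α × β) (α × β) ℝ)) := by
    rw [kronSubalgebra, ← Subalgebra.mem_toSubmodule, Algebra.adjoin_eq_span,
      Submonoid.closure_eq]
  rw [hspan, Submodule.mem_span_set']
  constructor
  · rintro ⟨K, x, M, rfl⟩
    choose A B hA hB hM using fun j => mem_kronSubmonoid.1 (M j).2
    exact ⟨K, x, A, B, hA, hB, by simp only [hM]⟩
  · rintro ⟨K, x, A, B, hA, hB, rfl⟩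
    exact ⟨K, x, fun j => ⟨kron (A j) (B j), mem_kronSubmonoid.2 ⟨_, _, hA j, hB j, rfl⟩⟩, rfl⟩

theorem separable_one : Separable (1 : Matrix (α × β) (α × β) ℝ) :=
  ⟨1, 1, 1, 1, by simp, fun _ => .one, fun _ => .one, by simp [kron_one_one]⟩

theorem separable_iff_mem_kronSubalgebra {Q : Matrix (α × β) (α × β) ℝ} :
    Separable Q ↔ Q ∈ kronSubalgebra α β ∧ Q *ᵥ 1 = 1 := by
  have sum_mulVec_one {K : ℕ} (x : Fin K → ℝ) {A : Fin K → Matrix α α ℝ}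
      {B : Fin K → Matrix β β ℝ} (hA : ∀ j, IsTransition (A j)) (hB : ∀ j, IsTransition (B j)) :
      (∑ j, x j • kron (A j) (B j)) *ᵥ 1 = (∑ j, x j) • 1 :=
    sum_smul_mulVec_of_mulVec_eq_self x fun j => ((hA j).kron (hB j)).mulVec_one
  constructor
  · rintro ⟨K, x, A, B, hx, hA, hB, rfl⟩
    exact ⟨mem_kronSubalgebra.2 ⟨K, x, A, B, hA, hB, rfl⟩, by
      rw [sum_mulVec_one x hA hB, hx, one_smul]⟩
  · rintro ⟨hmem, hrow⟩
    rcases isEmpty_or_nonempty (α × β) with _ | ⟨⟨p⟩⟩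
    -- With no rows, fixing the all-ones vector says nothing about the sum of the coefficients.
    · exact Subsingleton.elim 1 Q ▸ separable_one
    · obtain ⟨K, x, A, B, hA, hB, rfl⟩ := mem_kronSubalgebra.1 hmem
      rw [sum_mulVec_one x hA hB] at hrow
      exact ⟨K, x, A, B, by simpa using congrFun hrow p, hA, hB, rfl⟩

theorem stmt8_general (P : Matrix (α × β) (α × β) ℝ) {γ : ℝ} (hγ0 : γ ≠ 0) (hγ1 : γ ≠ 1)
    (hunit : IsUnit (1 - γ • P)) :
    Separable P ↔ Separable ((1 - γ) • (1 - γ • P)⁻¹) := by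
  rw [separable_iff_mem_kronSubalgebra, separable_iff_mem_kronSubalgebra,
    smul_inv_one_sub_smul_mem_subalgebra_iff _ hγ0 hγ1 hunit,
    smul_inv_one_sub_smul_mulVec_eq_self_iff hγ0 hunit]

end Kron

/-- `P` is separable iff `(1 − γ)(I − γP)⁻¹` is separable. -/
theorem stmt8 {α β : Type*} [Fintype α] [Fintype β] [DecidableEq α] [DecidableEq β]
    (P : Matrix (α × β) (α × β) ℝ) (hP : IsTransition P)
    (γ : ℝ) (hγ0 : 0 < γ) (hγ1 : γ < 1) :
    Separable P ↔ Separable ((1 - γ) • (1 - γ • P)⁻¹) :=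
  stmt8_general P hγ0.ne' hγ1.ne
    (hP.isUnit_one_sub_smul ((abs_of_pos hγ0).trans_lt hγ1))
end

section
/- Let α and β be finite types, P a transition matrix over α × β with strictly positive stationary probability vector μ, and γ ∈ [0,1). Let r_A : α → ℝ and r_B : β → ℝ satisfy ‖r_A‖_∞ ≤ R_A and ‖r_B‖_∞ ≤ R_B. Suppose there exist a transition matrix M_A over α and a transition matrix M_B over β such that for every (a,b) ∈ α × β: (1/2) ∑_{a'} | ∑_{b'} P (a,b) (a',b') − M_A a a' | ≤ ε_A and (1/2) ∑_{b'} | ∑_{a'} P (a,b) (a',b') − M_B b b' | ≤ ε_B. Let P_A, P_B be the marginalized local transition matrices of P with respect to μ, and set Q = (I − γP)^{-1}(r_A ⊗ e + e ⊗ r_B), Q_A = (I − γP_A)^{-1} r_A, Q_B = (I − γP_B)^{-1} r_B. Then: (i) ‖P_A − M_A‖_TV ≤ ε_A and ‖P_B − M_B‖_TV ≤ ε_B; and (ii) ‖Q − (Q_A ⊗ e + e ⊗ Q_B)‖_∞ ≤ 4γ (ε_A R_A + ε_B R_B) / (1 − γ)². -/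
/-!
Let `S` be the matrix `x ↦ x ⊗ e` and `W` the conditional expectation onto `A` under `μ`, both
contractions for the `ℓ^∞` operator norm (twice the total variation, on differences), with
`W * S = 1`. The local matrix is the compression `P_A = W * P * S`, and the hypothesis on `M_A`
bounds `P * S - S * M_A` by `2 * ε_A`. Hence `P_A - M_A = W * (P * S - S * M_A)` obeys the same
bound, and `P * S - S * P_A = (P * S - S * M_A) - S * (P_A - M_A)` obeys twice that bound.
The resolvent identity turns this failure of `S` to intertwine `P` and `P_A` into
`(1 - γ P)⁻¹ S - S (1 - γ P_A)⁻¹ = γ (1 - γ P)⁻¹ (P * S - S * P_A) (1 - γ P_A)⁻¹`,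
and each resolvent has norm at most `1 / (1 - γ)`. Agent `B` is symmetric, and the two errors add
because the reward, hence `Q`, is a sum of one term for each agent.
-/

open Matrix

/-- The marginalized local transition matrix of agent `A`. -/
noncomputable def localA {α β : Type*} [Fintype α] [Fintype β]
    (P : Matrix (α × β) (α × β) ℝ) (μ : α × β → ℝ) : Matrix α α ℝ :=
  Matrix.of fun a a' =>
    ∑ b, (μ (a, b) / ∑ b', μ (a, b')) * ∑ b', P (a, b) (a', b')

/-- The marginalized local transition matrix of agent `B`. -/
noncomputable def localB {α β : Type*} [Fintype α] [Fintype β]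
    (P : Matrix (α × β) (α × β) ℝ) (μ : α × β → ℝ) : Matrix β β ℝ :=
  Matrix.of fun b b' =>
    ∑ a, (μ (a, b) / ∑ a', μ (a', b)) * ∑ a', P (a, b) (a', b')

open scoped Matrix.Norms.Operator

section OperatorNorm

variable {m n E : Type*} [Fintype m] [Fintype n] [SeminormedAddCommGroup E]

theorem linfty_opNorm_le_iff (A : Matrix m n E) {c : ℝ} (hc : 0 ≤ c) :
    ‖A‖ ≤ c ↔ ∀ i, ∑ j, ‖A i j‖ ≤ c := by
  lift c to NNReal using hc
  rw [linfty_opNorm_def, NNReal.coe_le_coe, Finset.sup_le_iff]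
  simp [← NNReal.coe_le_coe]

theorem linfty_opNorm_le_iff_of_nonempty [Nonempty m] (A : Matrix m n E) {c : ℝ} :
    ‖A‖ ≤ c ↔ ∀ i, ∑ j, ‖A i j‖ ≤ c := by
  obtain hc | hc := le_or_gt 0 c
  · exact linfty_opNorm_le_iff A hc
  · refine iff_of_false (hc.trans_le (norm_nonneg A)).not_ge fun h => ?_
    obtain ⟨i⟩ := ‹Nonempty m›
    exact (hc.trans_le (Finset.sum_nonneg fun j _ => norm_nonneg (A i j))).not_ge (h i)

theorem linfty_opNorm_le_two_mul_iff [Nonempty m] (A : Matrix m n ℝ) {ε : ℝ} :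
    ‖A‖ ≤ 2 * ε ↔ ∀ i, (1 / 2 : ℝ) * ∑ j, |A i j| ≤ ε := by
  rw [linfty_opNorm_le_iff_of_nonempty]
  refine forall_congr' fun i => ?_
  rw [one_div, inv_mul_le_iff₀ two_pos]
  rfl

end OperatorNorm

section Resolvent

variable {ι κ 𝕜 : Type*} [Fintype ι] [Fintype κ] [DecidableEq ι] [DecidableEq κ]
  [NormedField 𝕜] {A : Matrix ι ι 𝕜} {B : Matrix κ κ 𝕜} {c : ℝ}

theorem isUnit_det_one_sub_of_norm_lt_one (hA : ‖A‖ < 1) : IsUnit (1 - A).det := by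
  refine isUnit_iff_ne_zero.mpr fun hdet => ?_
  obtain ⟨v, hv, hker⟩ := exists_mulVec_eq_zero_iff.mpr hdet
  rw [sub_mulVec, one_mulVec, sub_eq_zero] at hker
  refine lt_irrefl ‖v‖ ?_
  calc ‖v‖ = ‖A *ᵥ v‖ := congrArg norm hker
    _ ≤ ‖A‖ * ‖v‖ := linfty_opNorm_mulVec A v
    _ < ‖v‖ := mul_lt_of_lt_one_left (norm_pos_iff.mpr hv) hA

theorem norm_inv_one_sub_mulVec_le (hA : ‖A‖ ≤ c) (hc : c < 1) (v : ι → 𝕜) :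
    ‖(1 - A)⁻¹ *ᵥ v‖ ≤ ‖v‖ / (1 - c) := by
  set w := (1 - A)⁻¹ *ᵥ v with hw
  have hfix : w = v + A *ᵥ w := by
    have h : (1 - A) *ᵥ w = v := by
      rw [hw, mulVec_mulVec, mul_nonsing_inv _ (isUnit_det_one_sub_of_norm_lt_one (hA.trans_lt hc)),
        one_mulVec]
    rw [← h, sub_mulVec, one_mulVec, sub_add_cancel]
  have hle : ‖w‖ ≤ ‖v‖ + c * ‖w‖ :=
    calc ‖w‖ = ‖v + A *ᵥ w‖ := congrArg norm hfix
      _ ≤ ‖v‖ + ‖A *ᵥ w‖ := norm_add_le _ _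
      _ ≤ ‖v‖ + c * ‖w‖ := by
        gcongr
        exact (linfty_opNorm_mulVec A w).trans (by gcongr)
  rw [le_div_iff₀ (sub_pos.mpr hc)]
  linarith

theorem inv_mulVec_mulVec_sub_mulVec_inv_mulVec {R : Type*} [CommRing R] {A : Matrix ι ι R}
    {B : Matrix κ κ R} (hA : IsUnit (1 - A).det) (hB : IsUnit (1 - B).det) (S : Matrix ι κ R)
    (v : κ → R) :
    (1 - A)⁻¹ *ᵥ (S *ᵥ v) - S *ᵥ ((1 - B)⁻¹ *ᵥ v) =
      (1 - A)⁻¹ *ᵥ ((A * S - S * B) *ᵥ ((1 - B)⁻¹ *ᵥ v)) := by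
  have hcomm : A * S - S * B = S * (1 - B) - (1 - A) * S := by
    rw [Matrix.mul_sub, Matrix.sub_mul, Matrix.mul_one, Matrix.one_mul]
    abel
  simp only [hcomm, mulVec_mulVec, ← sub_mulVec]
  rw [Matrix.sub_mul, Matrix.mul_sub, mul_nonsing_inv_cancel_right _ _ hB, Matrix.mul_assoc _ S,
    nonsing_inv_mul_cancel_left _ _ hA]

theorem norm_inv_one_sub_mulVec_mulVec_sub_le (hA : ‖A‖ ≤ c) (hB : ‖B‖ ≤ c) (hc : c < 1)
    (S : Matrix ι κ 𝕜) (v : κ → 𝕜) :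
    ‖(1 - A)⁻¹ *ᵥ (S *ᵥ v) - S *ᵥ ((1 - B)⁻¹ *ᵥ v)‖ ≤
      ‖A * S - S * B‖ * ‖v‖ / (1 - c) ^ 2 := by
  have hc' : 0 < 1 - c := sub_pos.mpr hc
  rw [inv_mulVec_mulVec_sub_mulVec_inv_mulVec
    (isUnit_det_one_sub_of_norm_lt_one (hA.trans_lt hc))
    (isUnit_det_one_sub_of_norm_lt_one (hB.trans_lt hc))]
  calc ‖(1 - A)⁻¹ *ᵥ ((A * S - S * B) *ᵥ ((1 - B)⁻¹ *ᵥ v))‖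
      ≤ ‖(A * S - S * B) *ᵥ ((1 - B)⁻¹ *ᵥ v)‖ / (1 - c) := norm_inv_one_sub_mulVec_le hA hc _
    _ ≤ ‖A * S - S * B‖ * ‖(1 - B)⁻¹ *ᵥ v‖ / (1 - c) := by
      gcongr
      exact linfty_opNorm_mulVec _ _
    _ ≤ ‖A * S - S * B‖ * (‖v‖ / (1 - c)) / (1 - c) := by
      gcongr
      exact norm_inv_one_sub_mulVec_le hB hc v
    _ = ‖A * S - S * B‖ * ‖v‖ / (1 - c) ^ 2 := by
      field_simp

end Resolvent

section Compression

variable {ι κ 𝔸 : Type*} [Fintype ι] [Fintype κ] [SeminormedRing 𝔸]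
  {W : Matrix κ ι 𝔸} {S : Matrix ι κ 𝔸}

theorem norm_compression_le (hW : ‖W‖ ≤ 1) (hS : ‖S‖ ≤ 1) (P : Matrix ι ι 𝔸) :
    ‖W * P * S‖ ≤ ‖P‖ :=
  calc ‖W * P * S‖ ≤ ‖W‖ * ‖P‖ * ‖S‖ :=
        (linfty_opNorm_mul _ _).trans (by gcongr; exact linfty_opNorm_mul _ _)
    _ ≤ 1 * ‖P‖ * 1 := by gcongr
    _ = ‖P‖ := by rw [one_mul, mul_one]

variable [DecidableEq κ]

theorem norm_compression_sub_le (hWS : W * S = 1) (hW : ‖W‖ ≤ 1) (P : Matrix ι ι 𝔸)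
    (M : Matrix κ κ 𝔸) : ‖W * P * S - M‖ ≤ ‖P * S - S * M‖ := by
  have hfactor : W * P * S - M = W * (P * S - S * M) := by
    rw [Matrix.mul_sub, ← Matrix.mul_assoc, ← Matrix.mul_assoc, hWS, Matrix.one_mul]
  rw [hfactor]
  exact (linfty_opNorm_mul _ _).trans (mul_le_of_le_one_left (norm_nonneg _) hW)

theorem norm_mul_sub_mul_compression_le (hWS : W * S = 1) (hW : ‖W‖ ≤ 1) (hS : ‖S‖ ≤ 1)
    (P : Matrix ι ι 𝔸) (M : Matrix κ κ 𝔸) :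
    ‖P * S - S * (W * P * S)‖ ≤ 2 * ‖P * S - S * M‖ :=
  calc ‖P * S - S * (W * P * S)‖
      = ‖(P * S - S * M) - S * (W * P * S - M)‖ := by rw [Matrix.mul_sub, sub_sub_sub_cancel_right]
    _ ≤ ‖P * S - S * M‖ + ‖S * (W * P * S - M)‖ := norm_sub_le _ _
    _ ≤ ‖P * S - S * M‖ + ‖W * P * S - M‖ := by
      gcongr
      exact (linfty_opNorm_mul _ _).trans (mul_le_of_le_one_left (norm_nonneg _) hS)
    _ ≤ 2 * ‖P * S - S * M‖ := by
      rw [two_mul]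
      gcongr
      exact norm_compression_sub_le hWS hW P M

theorem norm_resolvent_mulVec_sub_compression_le {𝕜 : Type*} [NormedField 𝕜] [DecidableEq ι]
    {W : Matrix κ ι 𝕜} {S : Matrix ι κ 𝕜} (hWS : W * S = 1) (hW : ‖W‖ ≤ 1) (hS : ‖S‖ ≤ 1)
    {P : Matrix ι ι 𝕜} (hP : ‖P‖ ≤ 1) {M : Matrix κ κ 𝕜} {δ : ℝ} (hM : ‖P * S - S * M‖ ≤ δ)
    {γ : 𝕜} (hγ : ‖γ‖ < 1) {r : κ → 𝕜} {R : ℝ} (hr : ‖r‖ ≤ R) :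
    ‖(1 - γ • P)⁻¹ *ᵥ (S *ᵥ r) - S *ᵥ ((1 - γ • (W * P * S))⁻¹ *ᵥ r)‖ ≤
      2 * ‖γ‖ * (δ * R) / (1 - ‖γ‖) ^ 2 := by
  have hγP : ‖γ • P‖ ≤ ‖γ‖ := by
    rw [norm_smul]
    exact mul_le_of_le_one_right (norm_nonneg γ) hP
  have hγT : ‖γ • (W * P * S)‖ ≤ ‖γ‖ := by
    rw [norm_smul]
    exact mul_le_of_le_one_right (norm_nonneg γ) ((norm_compression_le hW hS P).trans hP)
  have hδ : 0 ≤ δ := (norm_nonneg _).trans hM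
  have hdefect : ‖γ • P * S - S * (γ • (W * P * S))‖ ≤ ‖γ‖ * (2 * δ) := by
    rw [Matrix.smul_mul, Matrix.mul_smul, ← smul_sub, norm_smul]
    gcongr
    exact (norm_mul_sub_mul_compression_le hWS hW hS P M).trans (by gcongr)
  calc ‖(1 - γ • P)⁻¹ *ᵥ (S *ᵥ r) - S *ᵥ ((1 - γ • (W * P * S))⁻¹ *ᵥ r)‖
      ≤ ‖γ • P * S - S * (γ • (W * P * S))‖ * ‖r‖ / (1 - ‖γ‖) ^ 2 :=
        norm_inv_one_sub_mulVec_mulVec_sub_le hγP hγT hγ S r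
    _ ≤ ‖γ‖ * (2 * δ) * R / (1 - ‖γ‖) ^ 2 := by gcongr
    _ = 2 * ‖γ‖ * (δ * R) / (1 - ‖γ‖) ^ 2 := by ring

end Compression

section Aggregation

variable {ι κ : Type*} [DecidableEq κ]

/-- The matrix of the pullback `x ↦ x ∘ f` of functions along `f`. For `f = Prod.fst` this is
`x ↦ x ⊗ e`, and for `f = Prod.snd` it is `y ↦ e ⊗ y`. -/
def pullbackMatrix (f : ι → κ) : Matrix ι κ ℝ :=
  (1 : Matrix κ κ ℝ).submatrix f id

/-- The matrix of the conditional expectation given `f`, on functions on `ι` weighted by `μ`.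
The weights need not sum to 1, and a row whose fibre has total weight 0 is 0. -/
noncomputable def condExpMatrix [Fintype ι] (μ : ι → ℝ) (f : ι → κ) : Matrix κ ι ℝ :=
  of fun k i => if f i = k then μ i / ∑ j with f j = k, μ j else 0

theorem pullbackMatrix_apply (f : ι → κ) (i : ι) (k : κ) :
    pullbackMatrix f i k = if f i = k then 1 else 0 :=
  one_apply

theorem pullbackMatrix_mul_apply [Fintype κ] {l : Type*} (f : ι → κ) (M : Matrix κ l ℝ)
    (i : ι) (j : l) :
    (pullbackMatrix f * M) i j = M (f i) j := by
  simp [mul_apply, pullbackMatrix_apply]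

theorem pullbackMatrix_mulVec [Fintype κ] (f : ι → κ) (x : κ → ℝ) :
    pullbackMatrix f *ᵥ x = x ∘ f := by
  ext i
  simp [mulVec, dotProduct, pullbackMatrix_apply]

theorem norm_pullbackMatrix_le_one [Fintype ι] [Fintype κ] (f : ι → κ) :
    ‖pullbackMatrix f‖ ≤ 1 := by
  refine (linfty_opNorm_le_iff _ zero_le_one).mpr fun i => ?_
  simp [pullbackMatrix_apply, apply_ite]

variable [Fintype ι]

theorem mul_pullbackMatrix_apply {l : Type*} (f : ι → κ) (P : Matrix l ι ℝ) (i : l) (k : κ) :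
    (P * pullbackMatrix f) i k = ∑ j with f j = k, P i j := by
  simp [mul_apply, pullbackMatrix_apply, Finset.sum_filter]

theorem condExpMatrix_mul_apply {l : Type*} (μ : ι → ℝ) (f : ι → κ) (A : Matrix ι l ℝ) (k : κ)
    (j : l) :
    (condExpMatrix μ f * A) k j = ∑ i with f i = k, μ i / (∑ i' with f i' = k, μ i') * A i j := by
  simp [mul_apply, condExpMatrix, Finset.sum_filter]

theorem condExpMatrix_mul_pullbackMatrix {μ : ι → ℝ} {f : ι → κ}
    (hμ : ∀ k, ∑ i with f i = k, μ i ≠ 0) : condExpMatrix μ f * pullbackMatrix f = 1 := by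
  ext k k'
  rw [condExpMatrix_mul_apply, one_apply]
  calc ∑ i with f i = k, μ i / (∑ i' with f i' = k, μ i') * pullbackMatrix f i k'
      = ∑ i with f i = k, μ i / (∑ i' with f i' = k, μ i') * if k = k' then 1 else 0 :=
        Finset.sum_congr rfl fun i hi => by
          rw [pullbackMatrix_apply, (Finset.mem_filter.mp hi).2]
    _ = if k = k' then 1 else 0 := by
      rw [← Finset.sum_mul, ← Finset.sum_div, div_self (hμ k), one_mul]

theorem norm_condExpMatrix_le_one [Fintype κ] {μ : ι → ℝ} (hμ : ∀ i, 0 ≤ μ i) (f : ι → κ) :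
    ‖condExpMatrix μ f‖ ≤ 1 := by
  refine (linfty_opNorm_le_iff _ zero_le_one).mpr fun k => ?_
  have hmass : 0 ≤ ∑ i with f i = k, μ i := Finset.sum_nonneg fun i _ => hμ i
  calc ∑ i, ‖condExpMatrix μ f k i‖
      = ∑ i with f i = k, μ i / ∑ j with f j = k, μ j := by
        rw [Finset.sum_filter]
        refine Finset.sum_congr rfl fun i _ => ?_
        rw [condExpMatrix, of_apply, apply_ite norm, norm_zero,
          Real.norm_of_nonneg (div_nonneg (hμ i) hmass)]
    _ = (∑ i with f i = k, μ i) / ∑ j with f j = k, μ j := (Finset.sum_div ..).symm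
    _ ≤ 1 := div_self_le_one _

/-- The transition matrix of the image under `f` of the chain `P`, with states in each fibre of `f`
weighted by `μ`. The marginalized local matrices are the cases `f = Prod.fst` and `f = Prod.snd`. -/
noncomputable def aggregate (P : Matrix ι ι ℝ) (μ : ι → ℝ) (f : ι → κ) : Matrix κ κ ℝ :=
  condExpMatrix μ f * P * pullbackMatrix f

theorem aggregate_apply (P : Matrix ι ι ℝ) (μ : ι → ℝ) (f : ι → κ) (k k' : κ) :
    aggregate P μ f k k' =
      ∑ i with f i = k, μ i / (∑ i' with f i' = k, μ i') * ∑ j with f j = k', P i j := by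
  rw [aggregate, Matrix.mul_assoc, condExpMatrix_mul_apply]
  simp only [mul_pullbackMatrix_apply]

variable [Fintype κ] {P : Matrix ι ι ℝ} {μ : ι → ℝ} {f : ι → κ} {M : Matrix κ κ ℝ} {ε : ℝ}

theorem norm_mul_pullbackMatrix_sub_le_iff [Nonempty ι] :
    ‖P * pullbackMatrix f - pullbackMatrix f * M‖ ≤ 2 * ε ↔
      ∀ i, (1 / 2 : ℝ) * ∑ k, |(∑ j with f j = k, P i j) - M (f i) k| ≤ ε := by
  simp only [linfty_opNorm_le_two_mul_iff, Matrix.sub_apply, mul_pullbackMatrix_apply,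
    pullbackMatrix_mul_apply]

theorem half_sum_abs_aggregate_sub_le (hμ : ∀ i, 0 ≤ μ i)
    (hmass : ∀ k, ∑ i with f i = k, μ i ≠ 0)
    (hM : ∀ i, (1 / 2 : ℝ) * ∑ k, |(∑ j with f j = k, P i j) - M (f i) k| ≤ ε) (k : κ) :
    (1 / 2 : ℝ) * ∑ k', |aggregate P μ f k k' - M k k'| ≤ ε := by
  have : Nonempty κ := ⟨k⟩
  have : Nonempty ι := (Finset.nonempty_of_sum_ne_zero (hmass k)).to_type
  have hnorm : ‖aggregate P μ f - M‖ ≤ 2 * ε :=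
    (norm_compression_sub_le (condExpMatrix_mul_pullbackMatrix hmass)
      (norm_condExpMatrix_le_one hμ f) P M).trans (norm_mul_pullbackMatrix_sub_le_iff.mpr hM)
  exact (linfty_opNorm_le_two_mul_iff _).mp hnorm k

theorem abs_resolvent_comp_sub_resolvent_aggregate_le [DecidableEq ι]
    (hP : ∀ i, ∑ j, |P i j| ≤ 1) (hμ : ∀ i, 0 ≤ μ i) (hmass : ∀ k, ∑ i with f i = k, μ i ≠ 0)
    (hM : ∀ i, (1 / 2 : ℝ) * ∑ k, |(∑ j with f j = k, P i j) - M (f i) k| ≤ ε)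
    {γ : ℝ} (hγ : |γ| < 1) {r : κ → ℝ} {R : ℝ} (hr : ∀ k, |r k| ≤ R) (i : ι) :
    |((1 - γ • P)⁻¹ *ᵥ (r ∘ f)) i - ((1 - γ • aggregate P μ f)⁻¹ *ᵥ r) (f i)| ≤
      4 * |γ| * (ε * R) / (1 - |γ|) ^ 2 := by
  have : Nonempty ι := ⟨i⟩
  have : Nonempty κ := ⟨f i⟩
  have hnorm := norm_resolvent_mulVec_sub_compression_le (condExpMatrix_mul_pullbackMatrix hmass)
    (norm_condExpMatrix_le_one hμ f) (norm_pullbackMatrix_le_one f)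
    ((linfty_opNorm_le_iff_of_nonempty P).mpr hP) (norm_mul_pullbackMatrix_sub_le_iff.mpr hM)
    hγ ((pi_norm_le_iff_of_nonempty r).mpr hr)
  rw [pullbackMatrix_mulVec, pullbackMatrix_mulVec] at hnorm
  refine (norm_le_pi_norm _ i).trans (hnorm.trans_eq ?_)
  rw [Real.norm_eq_abs]
  ring

end Aggregation

section TwoAgents

variable {α β : Type*} [Fintype α] [Fintype β]

theorem sum_filter_fst_eq {M : Type*} [AddCommMonoid M] [DecidableEq α] (g : α × β → M) (a : α) :
    ∑ p with p.1 = a, g p = ∑ b, g (a, b) := by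
  simp [Finset.sum_filter, Fintype.sum_prod_type_right]

theorem sum_filter_snd_eq {M : Type*} [AddCommMonoid M] [DecidableEq β] (g : α × β → M) (b : β) :
    ∑ p with p.2 = b, g p = ∑ a, g (a, b) := by
  simp [Finset.sum_filter, Fintype.sum_prod_type]

theorem localA_eq_aggregate_fst [DecidableEq α] (P : Matrix (α × β) (α × β) ℝ) (μ : α × β → ℝ) :
    localA P μ = aggregate P μ Prod.fst := by
  ext a a'
  simp only [localA, of_apply, aggregate_apply, sum_filter_fst_eq]

theorem localB_eq_aggregate_snd [DecidableEq β] (P : Matrix (α × β) (α × β) ℝ) (μ : α × β → ℝ) :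
    localB P μ = aggregate P μ Prod.snd := by
  ext b b'
  simp only [localB, of_apply, aggregate_apply, sum_filter_snd_eq]

theorem IsTransition.sum_abs_eq_one {ι : Type*} [Fintype ι] {P : Matrix ι ι ℝ}
    (hP : IsTransition P) (i : ι) : ∑ j, |P i j| = 1 := by
  simp only [abs_of_nonneg (hP.1 i _), hP.2 i]

theorem stmt11_general [DecidableEq α] [DecidableEq β]
    (P : Matrix (α × β) (α × β) ℝ) (hP : ∀ p, ∑ q, |P p q| ≤ 1)
    (μ : α × β → ℝ) (hμ : ∀ p, 0 ≤ μ p)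
    (hμA : ∀ a, ∑ b, μ (a, b) ≠ 0) (hμB : ∀ b, ∑ a, μ (a, b) ≠ 0)
    (γ RA RB εA εB : ℝ) (hγ : |γ| < 1)
    (rA : α → ℝ) (rB : β → ℝ) (hrA : ∀ a, |rA a| ≤ RA) (hrB : ∀ b, |rB b| ≤ RB)
    (MA : Matrix α α ℝ) (MB : Matrix β β ℝ)
    (hATVA : ∀ (a : α) (b : β),
      (1 / 2 : ℝ) * ∑ a', |(∑ b', P (a, b) (a', b')) - MA a a'| ≤ εA)
    (hATVB : ∀ (a : α) (b : β),
      (1 / 2 : ℝ) * ∑ b', |(∑ a', P (a, b) (a', b')) - MB b b'| ≤ εB) :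
    (∀ a, (1 / 2 : ℝ) * ∑ a', |localA P μ a a' - MA a a'| ≤ εA) ∧
    (∀ b, (1 / 2 : ℝ) * ∑ b', |localB P μ b b' - MB b b'| ≤ εB) ∧
    ∀ p, |((1 - γ • P)⁻¹ *ᵥ fun q => rA q.1 + rB q.2) p
            - (((1 - γ • localA P μ)⁻¹ *ᵥ rA) p.1 + ((1 - γ • localB P μ)⁻¹ *ᵥ rB) p.2)|
        ≤ 4 * |γ| * (εA * RA + εB * RB) / (1 - |γ|) ^ 2 := by
  simp only [← sum_filter_fst_eq] at hμA hATVA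
  simp only [← sum_filter_snd_eq] at hμB hATVB
  rw [localA_eq_aggregate_fst, localB_eq_aggregate_snd]
  refine ⟨half_sum_abs_aggregate_sub_le hμ hμA fun p => hATVA p.1 p.2,
    half_sum_abs_aggregate_sub_le hμ hμB fun p => hATVB p.1 p.2, fun p => ?_⟩
  have hA := abs_resolvent_comp_sub_resolvent_aggregate_le hP hμ hμA
    (fun p => hATVA p.1 p.2) hγ hrA p
  have hB := abs_resolvent_comp_sub_resolvent_aggregate_le hP hμ hμB
    (fun p => hATVB p.1 p.2) hγ hrB p
  have hsplit : (fun q : α × β => rA q.1 + rB q.2) = rA ∘ Prod.fst + rB ∘ Prod.snd := rfl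
  rw [hsplit, mulVec_add, Pi.add_apply, add_sub_add_comm, mul_add, add_div]
  exact (abs_add_le _ _).trans (add_le_add hA hB)

end TwoAgents

/-- Decomposition error bounded by the measure of Markov entanglement w.r.t. the
agent-wise total variation distance. -/
theorem stmt11 {α β : Type*} [Fintype α] [Fintype β] [DecidableEq α] [DecidableEq β]
    (P : Matrix (α × β) (α × β) ℝ) (hP : IsTransition P)
    (μ : α × β → ℝ) (hμpos : ∀ p, 0 < μ p) (hμsum : ∑ p, μ p = 1)
    (hstat : ∀ q, ∑ p, μ p * P p q = μ q)
    (γ RA RB εA εB : ℝ) (hγ0 : 0 ≤ γ) (hγ1 : γ < 1)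
    (rA : α → ℝ) (rB : β → ℝ) (hrA : ∀ a, |rA a| ≤ RA) (hrB : ∀ b, |rB b| ≤ RB)
    (MA : Matrix α α ℝ) (hMA : IsTransition MA)
    (MB : Matrix β β ℝ) (hMB : IsTransition MB)
    (hATVA : ∀ (a : α) (b : β),
      (1 / 2 : ℝ) * ∑ a', |(∑ b', P (a, b) (a', b')) - MA a a'| ≤ εA)
    (hATVB : ∀ (a : α) (b : β),
      (1 / 2 : ℝ) * ∑ b', |(∑ a', P (a, b) (a', b')) - MB b b'| ≤ εB) :
    (∀ a, (1 / 2 : ℝ) * ∑ a', |localA P μ a a' - MA a a'| ≤ εA) ∧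
    (∀ b, (1 / 2 : ℝ) * ∑ b', |localB P μ b b' - MB b b'| ≤ εB) ∧
    ∀ p, |((1 - γ • P)⁻¹).mulVec (fun q => rA q.1 + rB q.2) p
            - ((((1 - γ • localA P μ)⁻¹).mulVec rA) p.1
              + (((1 - γ • localB P μ)⁻¹).mulVec rB) p.2)|
        ≤ 4 * γ * (εA * RA + εB * RB) / (1 - γ) ^ 2 := by
  obtain ⟨_, _⟩ : Nonempty α ∧ Nonempty β := nonempty_prod.mp <| Finset.univ_nonempty_iff.mp <|
    Finset.nonempty_of_sum_ne_zero (hμsum.trans_ne one_ne_zero)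
  simpa only [abs_of_nonneg hγ0] using
    stmt11_general P (fun p => (hP.sum_abs_eq_one p).le) μ (fun p => (hμpos p).le)
      (fun a => (Finset.sum_pos (fun b _ => hμpos (a, b)) Finset.univ_nonempty).ne')
      (fun b => (Finset.sum_pos (fun a _ => hμpos (a, b)) Finset.univ_nonempty).ne')
      γ RA RB εA εB ((abs_of_nonneg hγ0).trans_lt hγ1) rA rB hrA hrB MA MB hATVA hATVB
end
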